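/- arXiv:2305.15110 — 2 statements merged into one kernel-verified Lean document; each statement's English description precedes it below -/
import Mathlib

section
/- Let G be a simple 3-connected graph with n vertices and m edges. If the size of a largest bond satisfies c*(G) ≥ m - n - 1, then every longest cycle of G shares at least one edge with every largest bond of G. -/
open SimpleGraph

/-- An edge-cut of `G`: a set of edges of `G` whose deletion disconnects `G`. -/
def IsEdgeCut {V : Type*} (G : SimpleGraph V) (S : Set (Sym2 V)) : Prop :=
  S ⊆ G.edgeSet ∧ ¬ (G.deleteEdges S).Connected

/-- A bond: a minimal nonempty edge-cut. -/
def IsBond {V : Type*} (G : SimpleGraph V) (S : Set (Sym2 V)) : Prop :=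
  S.Nonempty ∧ IsEdgeCut G S ∧ ∀ T ⊂ S, T.Nonempty → ¬ IsEdgeCut G T

/-- A largest bond: a bond of maximum size. -/
def IsLargestBond {V : Type*} (G : SimpleGraph V) (S : Set (Sym2 V)) : Prop :=
  IsBond G S ∧ ∀ T, IsBond G T → T.ncard ≤ S.ncard

/-- The set of edges of `G` between `X` and its complement. -/
def crossEdges {V : Type*} (G : SimpleGraph V) (X : Set V) : Set (Sym2 V) :=
  {e ∈ G.edgeSet | ∃ x ∈ X, ∃ y ∈ Xᶜ, e = s(x, y)}

/-- `G` is 2-connected: at least 3 vertices and connected after deleting any ≤ 1 vertices. -/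
def TwoConnected {V : Type*} (G : SimpleGraph V) : Prop :=
  3 ≤ Nat.card V ∧ ∀ s : Set V, s.ncard ≤ 1 → (G.induce sᶜ).Connected

/-- `G` is 3-connected: at least 4 vertices and connected after deleting any ≤ 2 vertices. -/
def ThreeConnected {V : Type*} (G : SimpleGraph V) : Prop :=
  4 ≤ Nat.card V ∧ ∀ s : Set V, s.ncard ≤ 2 → (G.induce sᶜ).Connected

/-- A longest cycle of `G`. -/
def IsLongestCycle {V : Type*} (G : SimpleGraph V) {v : V} (C : G.Walk v v) : Prop :=
  C.IsCycle ∧ ∀ (u : V) (D : G.Walk u u), D.IsCycle → D.length ≤ C.length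

/-!
Suppose a longest cycle `C` avoids the bond `B`. Then `C` lies on one side of `B`, so the other side
is connected and disjoint from `C`, and all edges of `B` have an end in a single component `D` of
`G - V(C)`. By 3-connectivity `D` has at least three neighbours on `C`; let `P` be the set of their
predecessors along `C`. As in the Chvátal–Erdős rerouting argument, maximality of `C` makes `P`
independent and disjoint from `N(D)`, and no component of `G - V(C)` has two neighbours in `P`.

Let `F` be the set of edges off `C` with an end in `P`. Since `P` is independent and all degrees are
at least three, `|F| ≥ |P| ≥ 3`. Every component of `G - V(C)` keeps an attachment outside `P`, so
deleting `F` together with all but one edge of `B` leaves a connected spanning graph that still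
contains the cycle `C`, hence has at least `n` edges. Thus `m ≥ n + 3 + (|B| - 1)`.
-/

section

variable {V : Type*} {G : SimpleGraph V}

section Connectivity

theorem connected_deleteEdges_of_reachable {F : Set (Sym2 V)} (hG : G.Connected)
    (hF : ∀ a b, G.Adj a b → s(a, b) ∈ F → (G.deleteEdges F).Reachable a b) :
    (G.deleteEdges F).Connected := by
  have hadj : ∀ a b, G.Adj a b → (G.deleteEdges F).Reachable a b := fun a b hab => by
    by_cases habF : s(a, b) ∈ F
    · exact hF a b hab habF
    · exact (deleteEdges_adj.2 ⟨hab, habF⟩).reachable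
  have := hG.nonempty
  refine ⟨fun a b => ?_⟩
  have hab := hG.preconnected a b
  rw [reachable_iff_reflTransGen] at hab
  induction hab with
  | refl => exact .rfl
  | tail _ hbc ih => exact ih.trans (hadj _ _ hbc)

theorem reachable_or_reachable_deleteEdges_singleton (hG : G.Connected) (x y v : V) :
    (G.deleteEdges {s(x, y)}).Reachable x v ∨ (G.deleteEdges {s(x, y)}).Reachable y v := by
  by_contra hv
  obtain ⟨w⟩ := hG.preconnected x v
  obtain ⟨⟨⟨a, b⟩, hab⟩, -, ha, hb⟩ := w.exists_boundary_dart
    {v | (G.deleteEdges {s(x, y)}).Reachable x v ∨ (G.deleteEdges {s(x, y)}).Reachable y v}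
    (Or.inl .rfl) hv
  by_cases he : s(a, b) = s(x, y)
  · rcases Sym2.eq_iff.1 he with ⟨-, rfl⟩ | ⟨-, rfl⟩
    exacts [hb (Or.inr .rfl), hb (Or.inl .rfl)]
  · have hadj : (G.deleteEdges {s(x, y)}).Adj a b := deleteEdges_adj.2 ⟨hab, he⟩
    exact hb (ha.imp (·.trans hadj.reachable) (·.trans hadj.reachable))

theorem card_le_ncard_edgeSet_of_isCycle [Finite V] (hG : G.Connected) {u : V} {C : G.Walk u u}
    (hC : C.IsCycle) : Nat.card V ≤ G.edgeSet.ncard := by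
  have hle := hG.card_vert_le_card_edgeSet_add_one
  have hne : Nat.card G.edgeSet + 1 ≠ Nat.card V := fun h =>
    (isTree_iff_connected_and_card.2 ⟨hG, h⟩).isAcyclic C hC
  rw [Nat.card_coe_set_eq] at hle hne
  omega

end Connectivity

section Bonds

variable {B : Set (Sym2 V)}

theorem IsBond.connected_deleteEdges_sdiff_singleton (hB : IsBond G B) (hG : G.Connected)
    {e : Sym2 V} (he : e ∈ B) : (G.deleteEdges (B \ {e})).Connected := by
  obtain ⟨-, ⟨hBG, -⟩, hmin⟩ := hB
  rcases (B \ {e}).eq_empty_or_nonempty with hempty | hne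
  · rwa [hempty, deleteEdges_empty]
  · by_contra hdis
    exact hmin _ (Set.sdiff_singleton_ssubset.2 he) hne ⟨Set.sdiff_subset.trans hBG, hdis⟩

theorem deleteEdges_sdiff_singleton_deleteEdges {e : Sym2 V} (he : e ∈ B) :
    (G.deleteEdges (B \ {e})).deleteEdges {e} = G.deleteEdges B := by
  rw [deleteEdges_deleteEdges, Set.sdiff_union_of_subset (Set.singleton_subset_iff.2 he)]

theorem IsBond.not_reachable (hB : IsBond G B) (hG : G.Connected) {a b : V} (hab : s(a, b) ∈ B) :
    ¬(G.deleteEdges B).Reachable a b := by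
  intro hreach
  refine hB.2.1.2 ?_
  rw [← deleteEdges_sdiff_singleton_deleteEdges hab] at hreach ⊢
  exact (hB.connected_deleteEdges_sdiff_singleton hG hab).connected_delete_edge_of_not_isBridge
    fun hbridge => isBridge_iff.1 hbridge hreach

theorem IsBond.reachable_of_not_reachable (hB : IsBond G B) (hG : G.Connected) {u v w : V}
    (huv : ¬(G.deleteEdges B).Reachable u v) (huw : ¬(G.deleteEdges B).Reachable u w) :
    (G.deleteEdges B).Reachable v w := by
  obtain ⟨⟨x, y⟩, hxy⟩ := hB.1
  have hends (z : V) : (G.deleteEdges B).Reachable x z ∨ (G.deleteEdges B).Reachable y z := by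
    rw [← deleteEdges_sdiff_singleton_deleteEdges hxy]
    exact reachable_or_reachable_deleteEdges_singleton
      (hB.connected_deleteEdges_sdiff_singleton hG hxy) x y z
  rcases hends u with hu | hu <;> rcases hends v with hv | hv <;> rcases hends w with hw | hw
  all_goals first
    | exact hv.symm.trans hw
    | exact absurd (hu.symm.trans hv) huv
    | exact absurd (hu.symm.trans hw) huw

end Bonds

section Components

variable {S : Set V} {B : Set (Sym2 V)}

theorem mem_componentCompl_of_reachable {H : SimpleGraph V} (hHG : H ≤ G) {D : G.ComponentCompl S}
    {y v : V} (hy : y ∈ D) (hS : ∀ w, H.Reachable y w → w ∉ S) (hv : H.Reachable y v) : v ∈ D := by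
  have hyv := (reachable_iff_reflTransGen y v).1 hv
  induction hyv with
  | refl => exact hy
  | @tail b c hyb hbc ih =>
    exact D.mem_of_adj b c (ih ((reachable_iff_reflTransGen y b).2 hyb)) (hS c hv) (hHG hbc)

theorem exists_isPath_of_mem_componentCompl {D : G.ComponentCompl S} {x y : V} (hx : x ∈ D)
    (hy : y ∈ D) : ∃ W : G.Walk x y, W.IsPath ∧ ∀ v ∈ W.support, v ∈ D := by
  obtain ⟨hxS, rfl⟩ := hx
  obtain ⟨hyS, hyD⟩ := hy
  obtain ⟨W, hW⟩ := (ConnectedComponent.exact hyD).symm.exists_isPath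
  have hWD : ∀ v ∈ (W.map (Embedding.induce Sᶜ).toHom).support, v ∈ G.componentComplMk hxS := by
    intro v hv
    rw [Walk.support_map, List.mem_map] at hv
    obtain ⟨z, hz, rfl⟩ := hv
    classical exact ⟨z.2, ConnectedComponent.sound (W.takeUntil z hz).reachable.symm⟩
  exact ⟨_, hW.map Subtype.val_injective, hWD⟩

theorem reachable_of_mem_componentCompl {H : SimpleGraph V} {D : G.ComponentCompl S}
    (hH : ∀ a ∈ D, ∀ b ∈ D, G.Adj a b → H.Adj a b) {x y : V} (hx : x ∈ D) (hy : y ∈ D) :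
    H.Reachable x y := by
  obtain ⟨W, -, hW⟩ := exists_isPath_of_mem_componentCompl hx hy
  refine ⟨W.transfer H ?_⟩
  rintro ⟨a, b⟩ he
  exact hH a (hW a (W.fst_mem_support_of_mem_edges he)) b
    (hW b (W.snd_mem_support_of_mem_edges he)) (W.adj_of_mem_edges he)

theorem IsBond.exists_componentCompl (hB : IsBond G B) (hG : G.Connected) (hS : S.Nonempty)
    (hSB : ∀ a ∈ S, ∀ b ∈ S, (G.deleteEdges B).Reachable a b) :
    ∃ D : G.ComponentCompl S, ∀ a ∉ D, ∀ b ∉ D, s(a, b) ∉ B := by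
  obtain ⟨u, hu⟩ := hS
  have := hG.nonempty
  obtain ⟨y, hy⟩ : ∃ y, ¬(G.deleteEdges B).Reachable u y := by
    by_contra! hall
    exact hB.2.1.2 (connected_iff_exists_forall_reachable _ |>.2 ⟨u, hall⟩)
  have hyS : ∀ w, (G.deleteEdges B).Reachable y w → w ∉ S := fun w hyw hw =>
    hy ((hSB u hu w hw).trans hyw.symm)
  have hout : ∀ v ∉ G.componentComplMk (hyS y .rfl), (G.deleteEdges B).Reachable u v := by
    intro v hv
    by_contra huv
    exact hv (mem_componentCompl_of_reachable (deleteEdges_le B) (componentComplMk_mem G _) hyS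
      (hB.reachable_of_not_reachable hG hy huv))
  exact ⟨_, fun a ha b hb hab =>
    hB.not_reachable hG hab ((hout a ha).symm.trans (hout b hb))⟩

theorem IsBond.exists_componentCompl_of_edges {u : V} {C : G.Walk u u} {B : Set (Sym2 V)}
    (hB : IsBond G B) (hG : G.Connected) (hCB : ∀ e ∈ C.edges, e ∉ B) :
    ∃ D : G.ComponentCompl {v | v ∈ C.support}, ∀ a ∉ D, ∀ b ∉ D, s(a, b) ∉ B := by
  classical
  have hreach : ∀ v ∈ C.support, (G.deleteEdges B).Reachable u v := fun v hv =>
    ⟨(C.takeUntil v hv).toDeleteEdges B fun e he => hCB e (C.edges_takeUntil_subset_edges hv he)⟩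
  exact hB.exists_componentCompl hG ⟨u, C.start_mem_support⟩ fun a ha b hb =>
    (hreach a ha).symm.trans (hreach b hb)

end Components

/-- The vertices outside `T` adjacent to some vertex of `T`, often written `N(T)`. -/
def vertexBoundary (G : SimpleGraph V) (T : Set V) : Set V :=
  {b | b ∉ T ∧ ∃ a ∈ T, G.Adj a b}

theorem vertexBoundary_singleton (v : V) : vertexBoundary G {v} = G.neighborSet v := by
  ext w
  simpa [vertexBoundary] using fun h : G.Adj v w => h.ne'

theorem vertexBoundary_componentCompl_subset {S : Set V} (D : G.ComponentCompl S) :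
    vertexBoundary G D ⊆ S := by
  rintro b ⟨hbD, a, haD, hab⟩
  by_contra hbS
  exact hbD (D.mem_of_adj a b haD hbS hab)

section ThreeConnected

theorem ThreeConnected.finite (h3 : ThreeConnected G) : Finite V :=
  Nat.finite_of_card_ne_zero (by have := h3.1; omega)

theorem ThreeConnected.connected (h3 : ThreeConnected G) : G.Connected := by
  have h := h3.2 ∅ (by simp)
  rw [Set.compl_empty] at h
  exact (induceUnivIso G).connected_iff.1 h

theorem ThreeConnected.three_le_ncard_vertexBoundary (h3 : ThreeConnected G) {T : Set V}
    (hT : T.Nonempty) (hTc : 3 ≤ Tᶜ.ncard) : 3 ≤ (vertexBoundary G T).ncard := by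
  have := h3.finite
  by_contra! hlt
  obtain ⟨v, hv⟩ := hT
  obtain ⟨w, hwT, hw⟩ := Set.exists_mem_notMem_of_ncard_lt_ncard (hlt.trans_le hTc)
  obtain ⟨W⟩ := (h3.2 _ (Nat.le_of_lt_succ hlt)).preconnected ⟨v, fun h => h.1 hv⟩ ⟨w, hw⟩
  obtain ⟨d, -, hfst, hsnd⟩ := W.exists_boundary_dart (Subtype.val ⁻¹' T) hv hwT
  exact d.snd.2 ⟨hsnd, d.fst, hfst, d.adj⟩

theorem ThreeConnected.three_le_ncard_neighborSet (h3 : ThreeConnected G) (v : V) :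
    3 ≤ (G.neighborSet v).ncard := by
  have := h3.finite
  rw [← vertexBoundary_singleton]
  refine h3.three_le_ncard_vertexBoundary (Set.singleton_nonempty v) ?_
  have := h3.1
  rw [Set.ncard_compl, Set.ncard_singleton]
  omega

end ThreeConnected

section Paths

theorem notMem_tail_support_of_isPath {u v : V} {p : G.Walk u v} (hp : p.IsPath) :
    u ∉ p.support.tail := by
  have h := hp.support_nodup
  rw [← p.cons_tail_support] at h
  exact (List.nodup_cons.1 h).1

theorem isPath_append {u v w : V} {p : G.Walk u v} {q : G.Walk v w} (hp : p.IsPath) (hq : q.IsPath)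
    (hpq : ∀ x ∈ p.support, x ∈ q.support → x = v) : (p.append q).IsPath := by
  rw [Walk.isPath_def, Walk.support_append, List.nodup_append']
  refine ⟨hp.support_nodup, hq.support_nodup.sublist (List.tail_sublist _), fun x hxp hxq => ?_⟩
  exact notMem_tail_support_of_isPath hq (hpq x hxp (List.mem_of_mem_tail hxq) ▸ hxq)

theorem isCycle_append {u v : V} {p : G.Walk u v} {q : G.Walk v u} (hp : p.IsPath) (hq : q.IsPath)
    (hpq : ∀ x ∈ p.support, x ∈ q.support → x = u ∨ x = v) (hlen : 1 < p.length ∨ 1 < q.length) :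
    (p.append q).IsCycle := by
  refine hp.isCycle_append hq (fun x hxp hxq => ?_) hlen
  rcases hpq x (List.mem_of_mem_tail hxp) (List.mem_of_mem_tail hxq) with rfl | rfl
  exacts [notMem_tail_support_of_isPath hp hxp, notMem_tail_support_of_isPath hq hxq]

theorem exists_walk_of_mem_darts {u : V} {C : G.Walk u u} {d : G.Dart} (hd : d ∈ C.darts) :
    ∃ W : G.Walk d.snd d.fst, (d :: W.darts).Perm C.darts ∧ W.support.Perm C.support.tail := by
  obtain ⟨p, q, hpq⟩ := (Walk.isSubwalk_toWalk_adj_iff_mem_darts C).2 hd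
  have hperm : (d :: (q.append p).darts).Perm C.darts := by
    simpa [hpq] using (List.perm_append_comm.cons d).trans List.perm_middle.symm
  refine ⟨q.append p, hperm, ?_⟩
  rw [← Walk.cons_map_snd_darts, ← Walk.map_snd_darts]
  exact hperm.map (·.snd)

theorem exists_walk_of_mem_darts_of_mem_darts {u : V} {C : G.Walk u u} {d d' : G.Dart}
    (hd : d ∈ C.darts) (hd' : d' ∈ C.darts) (hne : d' ≠ d) :
    ∃ (p : G.Walk d.snd d'.fst) (q : G.Walk d'.snd d.fst),
      (p.support ++ q.support).Perm C.support.tail := by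
  obtain ⟨W, hdarts, hsupp⟩ := exists_walk_of_mem_darts hd
  have hd'W : d' ∈ W.darts := ((List.mem_cons.1 (hdarts.mem_iff.2 hd')).resolve_left hne)
  obtain ⟨p, q, rfl⟩ := (Walk.isSubwalk_toWalk_adj_iff_mem_darts W).2 hd'W
  exact ⟨p, q, by simpa [Walk.support_append] using hsupp⟩

/-- A walk is an `S`-ear if it is a nontrivial path meeting `S` exactly in its two ends; this is the
`S`-path of Diestel. -/
def IsEar (S : Set V) {a b : V} (R : G.Walk a b) : Prop :=
  R.IsPath ∧ a ≠ b ∧ ∀ v ∈ R.support, v ∈ S ↔ v = a ∨ v = b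

theorem IsEar.length_pos {S : Set V} {a b : V} {R : G.Walk a b} (hR : IsEar S R) : 0 < R.length :=
  Nat.pos_of_ne_zero fun h => hR.2.1 (Walk.eq_of_length_eq_zero h)

theorem IsEar.isPath_append {S : Set V} {a b c : V} {p : G.Walk a b} {R : G.Walk b c}
    (hR : IsEar S R) (hp : p.IsPath) (hpS : ∀ v ∈ p.support, v ∈ S) (hc : c ∉ p.support) :
    (p.append R).IsPath :=
  _root_.isPath_append hp hR.1 fun v hvp hvR =>
    ((hR.2.2 v hvR).1 (hpS v hvp)).resolve_right fun h => hc (h ▸ hvp)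

theorem isCycle_append_of_isEar {S : Set V} {a b c d : V} {R : G.Walk b d} {Z : G.Walk c a}
    (hR : IsEar S R) (hZ : IsEar S Z) (hRZ : R.support.Disjoint Z.support) {p : G.Walk a b}
    {q : G.Walk c d} (hp : p.IsPath) (hq : q.IsPath) (hpS : ∀ v ∈ p.support, v ∈ S)
    (hqS : ∀ v ∈ q.support, v ∈ S) (hpq : p.support.Disjoint q.support)
    (hlen : 3 ≤ p.length + R.length + q.length + Z.length) :
    ((p.append R).append (q.reverse.append Z)).IsCycle := by
  have hpR : (p.append R).IsPath :=
    hR.isPath_append hp hpS fun h => hpq h q.end_mem_support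
  have hqZ : (q.reverse.append Z).IsPath :=
    hZ.isPath_append hq.reverse (fun v hv => hqS v (by simpa using hv)) fun h =>
      hpq p.start_mem_support (by simpa using h)
  refine isCycle_append hpR hqZ (fun v hv hv' => ?_) ?_
  · simp only [Walk.mem_support_append_iff, Walk.support_reverse, List.mem_reverse] at hv hv'
    rcases hv with hvp | hvR <;> rcases hv' with hvq | hvZ
    · exact absurd hvq (hpq hvp)
    · exact .inl (((hZ.2.2 v hvZ).1 (hpS v hvp)).resolve_left fun h =>
        hpq hvp (h ▸ q.start_mem_support))
    · exact .inr (((hR.2.2 v hvR).1 (hqS v hvq)).resolve_left fun h =>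
        hpq p.end_mem_support (h ▸ hvq))
    · exact absurd hvZ (hRZ hvR)
  · simp only [Walk.length_append, Walk.length_reverse]
    omega

theorem exists_isEar_of_mem_vertexBoundary {S : Set V} {D : G.ComponentCompl S} {a b : V}
    (ha : a ∈ vertexBoundary G D) (hb : b ∈ vertexBoundary G D) (hab : a ≠ b) :
    ∃ R : G.Walk a b, IsEar S R ∧ 2 ≤ R.length ∧ ∀ v ∈ R.support, v = a ∨ v = b ∨ v ∈ D := by
  have haS := vertexBoundary_componentCompl_subset D ha
  have hbS := vertexBoundary_componentCompl_subset D hb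
  obtain ⟨haD, x, hxD, hxa⟩ := ha
  obtain ⟨hbD, y, hyD, hyb⟩ := hb
  obtain ⟨W, hW, hWD⟩ := exists_isPath_of_mem_componentCompl hxD hyD
  have hsupp : ∀ v ∈ (Walk.cons hxa.symm (W.concat hyb)).support, v = a ∨ v = b ∨ v ∈ D := by
    intro v hv
    rw [Walk.support_cons, Walk.support_concat, List.mem_cons, List.mem_append,
      List.mem_singleton] at hv
    exact hv.imp_right fun hv => hv.symm.imp_right (hWD v)
  refine ⟨.cons hxa.symm (W.concat hyb), ⟨?_, hab, fun v hv => ⟨fun hvS => ?_, ?_⟩⟩, ?_, hsupp⟩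
  · refine (hW.concat (fun h => hbD (hWD b h)) hyb).cons fun h => ?_
    rw [Walk.support_concat, List.mem_append, List.mem_singleton] at h
    exact h.elim (fun h => haD (hWD a h)) hab
  · rcases hsupp v hv with h | h | h
    exacts [.inl h, .inr h, absurd hvS (ComponentCompl.notMem_of_mem h)]
  · rintro (rfl | rfl) <;> assumption
  · simp

end Paths

section LongestCycle

/-- The vertices that immediately precede a vertex of `A` along the walk `C`. -/
def predecessors {u v : V} (C : G.Walk u v) (A : Set V) : Set V :=
  {p | ∃ d ∈ C.darts, d.fst = p ∧ d.snd ∈ A}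

theorem predecessors_subset_support {u v : V} (C : G.Walk u v) (A : Set V) :
    predecessors C A ⊆ {v | v ∈ C.support} := by
  rintro _ ⟨d, hd, rfl, -⟩
  exact C.dart_fst_mem_support_of_mem_darts hd

variable {u : V} {C : G.Walk u u}

theorem dart_eq_of_fst_eq (hC : C.IsCycle) {d d' : G.Dart} (hd : d ∈ C.darts)
    (hd' : d' ∈ C.darts) (h : d.fst = d'.fst) : d = d' :=
  List.inj_on_of_nodup_map (C.map_fst_darts ▸ hC.nodup_dropLast_support) hd hd' h

theorem dart_eq_of_snd_eq (hC : C.IsCycle) {d d' : G.Dart} (hd : d ∈ C.darts)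
    (hd' : d' ∈ C.darts) (h : d.snd = d'.snd) : d = d' :=
  List.inj_on_of_nodup_map (C.map_snd_darts ▸ hC.support_nodup) hd hd' h

theorem mem_tail_support_of_mem_support (hC : ¬C.Nil) {v : V} (hv : v ∈ C.support) :
    v ∈ C.support.tail := by
  rcases C.mem_support_iff.1 hv with rfl | h
  exacts [Walk.end_mem_tail_support hC, h]

theorem ncard_le_ncard_predecessors (hC : C.IsCycle) {A : Set V}
    (hA : A ⊆ {v | v ∈ C.support}) : A.ncard ≤ (predecessors C A).ncard := by
  have hdart : ∀ a : A, ∃ d ∈ C.darts, d.snd = a := fun a => by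
    have ha := mem_tail_support_of_mem_support hC.not_nil (hA a.2)
    rwa [← C.map_snd_darts, List.mem_map] at ha
  choose d hd hsnd using hdart
  rw [← Nat.card_coe_set_eq, ← Nat.card_coe_set_eq]
  have hfin : Finite (predecessors C A) :=
    C.support.finite_toSet.subset (predecessors_subset_support C A)
  refine Nat.card_le_card_of_injective
    (fun a => (⟨(d a).fst, d a, hd a, rfl, by simp [hsnd]⟩ : predecessors C A)) fun a b hab => ?_
  have hdd := dart_eq_of_fst_eq hC (hd a) (hd b) (congrArg Subtype.val hab)
  exact Subtype.ext (by rw [← hsnd a, ← hsnd b, hdd])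

theorem IsLongestCycle.length_le_one_of_isEar (hC : IsLongestCycle G C) {d : G.Dart}
    (hd : d ∈ C.darts) {R : G.Walk d.fst d.snd} (hR : IsEar {v | v ∈ C.support} R) :
    R.length ≤ 1 := by
  obtain ⟨W, -, hW⟩ := exists_walk_of_mem_darts hd
  have hWpath : W.IsPath := W.isPath_def.2 (hW.nodup_iff.2 hC.1.support_nodup)
  have hlen : W.length + 1 = C.length := by simpa using hW.length_eq
  have h3 := hC.1.three_le_length
  have hcycle : (R.append W).IsCycle :=
    isCycle_append hR.1 hWpath
      (fun v hvR hvW => (hR.2.2 v hvR).1 (List.mem_of_mem_tail (hW.mem_iff.1 hvW)))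
      (.inr (by omega))
  have hmax := hC.2 _ _ hcycle
  rw [Walk.length_append] at hmax
  omega

/-- Otherwise replacing the darts `d` and `d'` of `C` by the two ears yields a longer cycle. -/
theorem IsLongestCycle.length_add_length_le_two (hC : IsLongestCycle G C) {d d' : G.Dart}
    (hd : d ∈ C.darts) (hd' : d' ∈ C.darts) {R : G.Walk d'.fst d.fst} {Z : G.Walk d'.snd d.snd}
    (hR : IsEar {v | v ∈ C.support} R) (hZ : IsEar {v | v ∈ C.support} Z)
    (hRZ : R.support.Disjoint Z.support) : R.length + Z.length ≤ 2 := by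
  obtain ⟨p, q, hpq⟩ := exists_walk_of_mem_darts_of_mem_darts hd hd' (fun h => hR.2.1 (h ▸ rfl))
  obtain ⟨hp, hq, hdisj⟩ := List.nodup_append'.1 (hpq.nodup_iff.2 hC.1.support_nodup)
  have hlen : p.length + q.length + 2 = C.length := by
    have := hpq.length_eq
    simp only [List.length_append, Walk.length_support, List.length_tail] at this
    omega
  have hmem : ∀ v, v ∈ p.support ∨ v ∈ q.support → v ∈ C.support := fun v hv =>
    List.mem_of_mem_tail (hpq.mem_iff.1 (List.mem_append.2 hv))
  have hcycle : ((p.append R).append (q.reverse.append Z)).IsCycle := by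
    refine isCycle_append_of_isEar hR hZ hRZ (p.isPath_def.2 hp) (q.isPath_def.2 hq)
      (fun v hv => hmem v (.inl hv)) (fun v hv => hmem v (.inr hv)) hdisj ?_
    have := hR.length_pos
    have := hZ.length_pos
    have := hC.1.three_le_length
    omega
  have hmax := hC.2 _ _ hcycle
  simp only [Walk.length_append, Walk.length_reverse] at hmax
  omega

variable {D : G.ComponentCompl {v | v ∈ C.support}}

theorem IsLongestCycle.disjoint_predecessors_vertexBoundary (hC : IsLongestCycle G C) :
    Disjoint (predecessors C (vertexBoundary G D)) (vertexBoundary G D) := by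
  refine Set.disjoint_left.2 ?_
  rintro _ ⟨d, hd, rfl, hsnd⟩ hfst
  obtain ⟨R, hR, hlen, -⟩ := exists_isEar_of_mem_vertexBoundary hfst hsnd d.fst_ne_snd
  have := hC.length_le_one_of_isEar hd hR
  omega

theorem IsLongestCycle.exists_mem_componentCompl_of_isEar (hC : IsLongestCycle G C) {p q : V}
    (hp : p ∈ predecessors C (vertexBoundary G D)) (hq : q ∈ predecessors C (vertexBoundary G D))
    {R : G.Walk p q} (hR : IsEar {v | v ∈ C.support} R) : ∃ v ∈ R.support, v ∈ D := by
  by_contra! hRD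
  have hdisj := Set.disjoint_left.1 (hC.disjoint_predecessors_vertexBoundary (D := D))
  have hends : ∀ v ∈ R.support, v ∉ vertexBoundary G D := fun v hv hvD => by
    rcases (hR.2.2 v hv).1 (vertexBoundary_componentCompl_subset D hvD) with rfl | rfl
    exacts [hdisj hp hvD, hdisj hq hvD]
  obtain ⟨d', hd', rfl, hsnd'⟩ := hp
  obtain ⟨d, hd, rfl, hsnd⟩ := hq
  have hne : d'.snd ≠ d.snd := fun h =>
    hR.2.1 (by rw [dart_eq_of_snd_eq hC.1 hd' hd h])
  obtain ⟨Z, hZ, hlen, hZD⟩ := exists_isEar_of_mem_vertexBoundary hsnd' hsnd hne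
  have hRZ : R.support.Disjoint Z.support := fun v hvR hvZ => by
    rcases hZD v hvZ with rfl | rfl | hvD
    exacts [hends _ hvR hsnd', hends _ hvR hsnd, hRD v hvR hvD]
  have := hC.length_add_length_le_two hd hd' hR hZ hRZ
  have := hR.length_pos
  omega

theorem IsLongestCycle.isIndepSet_predecessors (hC : IsLongestCycle G C) :
    G.IsIndepSet (predecessors C (vertexBoundary G D)) := by
  intro p hp q hq hpq (hadj : G.Adj p q)
  have hpC := predecessors_subset_support C _ hp
  have hqC := predecessors_subset_support C _ hq
  have hear : IsEar {v | v ∈ C.support} hadj.toWalk := by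
    refine ⟨hadj.isPath_toWalk, hpq, fun v hv => ⟨fun _ => by simpa using hv, ?_⟩⟩
    rintro (rfl | rfl) <;> assumption
  obtain ⟨v, hv, hvD⟩ := hC.exists_mem_componentCompl_of_isEar hp hq hear
  refine ComponentCompl.notMem_of_mem hvD ?_
  rcases (by simpa using hv : v = p ∨ v = q) with rfl | rfl <;> assumption

theorem IsLongestCycle.not_vertexBoundary_subset_predecessors (hC : IsLongestCycle G C)
    {D' : G.ComponentCompl {v | v ∈ C.support}} (hD' : (vertexBoundary G D').Nontrivial) :
    ¬vertexBoundary G D' ⊆ predecessors C (vertexBoundary G D) := by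
  intro hsub
  obtain ⟨p, hp, q, hq, hpq⟩ := hD'
  have hDD' : D' ≠ D := by
    rintro rfl
    exact Set.disjoint_left.1 hC.disjoint_predecessors_vertexBoundary (hsub hp) hp
  obtain ⟨R, hR, -, hRD'⟩ := exists_isEar_of_mem_vertexBoundary hp hq hpq
  obtain ⟨v, hv, hvD⟩ := hC.exists_mem_componentCompl_of_isEar (hsub hp) (hsub hq) hR
  rcases hRD' v hv with rfl | rfl | hvD'
  · exact ComponentCompl.notMem_of_mem hvD (vertexBoundary_componentCompl_subset D' hp)
  · exact ComponentCompl.notMem_of_mem hvD (vertexBoundary_componentCompl_subset D' hq)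
  · exact Set.disjoint_left.1 (ComponentCompl.pairwise_disjoint hDD') hvD' hvD

end LongestCycle

section Counting

theorem ncard_support_of_isCycle {u : V} {C : G.Walk u u} (hC : C.IsCycle) :
    {v | v ∈ C.support}.ncard = C.length := by
  classical
  have htail : {v | v ∈ C.support} = C.support.tail.toFinset := by
    ext v
    simpa using ⟨mem_tail_support_of_mem_support hC.not_nil, List.mem_of_mem_tail⟩
  rw [htail, Set.ncard_coe_finset, List.toFinset_card_of_nodup hC.support_nodup]
  simp

theorem ThreeConnected.three_le_ncard_vertexBoundary_componentCompl (h3 : ThreeConnected G)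
    {u : V} {C : G.Walk u u} (hC : C.IsCycle) (D : G.ComponentCompl {v | v ∈ C.support}) :
    3 ≤ (vertexBoundary G D).ncard := by
  have := h3.finite
  refine h3.three_le_ncard_vertexBoundary D.nonempty ?_
  calc 3 ≤ C.length := hC.three_le_length
    _ = {v | v ∈ C.support}.ncard := (ncard_support_of_isCycle hC).symm
    _ ≤ _ := Set.ncard_le_ncard fun v hv hvD => ComponentCompl.notMem_of_mem hvD hv

/-- The edges of `G` off the walk `C` that have an end in `P`. -/
def edgesOffAt {u v : V} (C : G.Walk u v) (P : Set V) : Set (Sym2 V) :=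
  {e ∈ G.edgeSet | e ∉ C.edges ∧ ∃ p ∈ P, p ∈ e}

variable {u : V} {C : G.Walk u u} {P : Set V}

theorem ThreeConnected.exists_adj_notMem_edges (h3 : ThreeConnected G) (hC : C.IsCycle) {p : V}
    (hp : p ∈ C.support) : ∃ w, G.Adj p w ∧ s(p, w) ∉ C.edges := by
  have hlt : (C.toSubgraph.neighborSet p).ncard < (G.neighborSet p).ncard := by
    rw [hC.ncard_neighborSet_toSubgraph_eq_two hp]
    exact h3.three_le_ncard_neighborSet p
  have := h3.finite
  obtain ⟨w, hw, hwC⟩ := Set.exists_mem_notMem_of_ncard_lt_ncard hlt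
  exact ⟨w, hw, fun h => hwC ((C.adj_toSubgraph_iff_mem_edges).2 h)⟩

theorem ThreeConnected.ncard_le_ncard_edgesOffAt (h3 : ThreeConnected G) (hC : C.IsCycle)
    (hPC : P ⊆ {v | v ∈ C.support}) (hP : G.IsIndepSet P) :
    P.ncard ≤ (edgesOffAt C P).ncard := by
  have := h3.finite
  choose! w hadj hw using fun p (hp : p ∈ P) => h3.exists_adj_notMem_edges hC (hPC hp)
  refine Set.ncard_le_ncard_of_injOn (fun p => s(p, w p))
    (fun p hp => ⟨hadj p hp, hw p hp, p, hp, Sym2.mem_mk_left _ _⟩) fun p hp q hq hpq => ?_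
  rcases Sym2.eq_iff.1 hpq with ⟨h, -⟩ | ⟨-, h⟩
  · exact h
  · by_contra hne
    exact hP hp hq hne (h ▸ hadj p hp)

variable {D : G.ComponentCompl {v | v ∈ C.support}} {H : SimpleGraph V}

theorem reachable_deleteEdges_edgesOffAt_of_mem_support
    (hGH : ∀ a ∉ D, ∀ b ∉ D, G.Adj a b → H.Adj a b) {v : V} (hv : v ∈ C.support) :
    (H.deleteEdges (edgesOffAt C P)).Reachable u v := by
  have hD : ∀ v ∈ C.support, v ∉ D := fun v hv hvD => ComponentCompl.notMem_of_mem hvD hv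
  classical
  refine ⟨(C.takeUntil v hv).transfer _ ?_⟩
  rintro ⟨a, b⟩ he
  have heC := C.edges_takeUntil_subset_edges hv he
  exact deleteEdges_adj.2 ⟨hGH a (hD a (C.fst_mem_support_of_mem_edges heC)) b
    (hD b (C.snd_mem_support_of_mem_edges heC)) (C.adj_of_mem_edges heC), fun h => h.2.1 heC⟩

theorem reachable_deleteEdges_edgesOffAt_of_notMem
    (hGH : ∀ a ∉ D, ∀ b ∉ D, G.Adj a b → H.Adj a b) (hPC : P ⊆ {v | v ∈ C.support})
    (hP : ∀ D' : G.ComponentCompl {v | v ∈ C.support}, ¬vertexBoundary G D' ⊆ P) {v : V}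
    (hvD : v ∉ D) : (H.deleteEdges (edgesOffAt C P)).Reachable u v := by
  by_cases hv : v ∈ C.support
  · exact reachable_deleteEdges_edgesOffAt_of_mem_support hGH hv
  obtain ⟨D', hvD'⟩ : ∃ D' : G.ComponentCompl {v | v ∈ C.support}, v ∈ D' :=
    ⟨_, componentComplMk_mem G hv⟩
  have hDD' : D' ≠ D := fun h => hvD (h ▸ hvD')
  have hnotMem : ∀ x ∈ D', x ∉ D ∧ x ∉ P := fun x hx =>
    ⟨Set.disjoint_left.1 (ComponentCompl.pairwise_disjoint hDD') hx,
      fun hxP => ComponentCompl.notMem_of_mem hx (hPC hxP)⟩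
  have hadj : ∀ a b, a ∉ D ∧ a ∉ P → b ∉ D ∧ b ∉ P → G.Adj a b →
      (H.deleteEdges (edgesOffAt C P)).Adj a b := fun a b ha hb hab => by
    refine deleteEdges_adj.2 ⟨hGH a ha.1 b hb.1 hab, fun ⟨_, _, p, hp, hpab⟩ => ?_⟩
    rcases Sym2.mem_iff.1 hpab with rfl | rfl
    exacts [ha.2 hp, hb.2 hp]
  obtain ⟨c, hc, hcP⟩ := Set.not_subset.1 (hP D')
  have hcC := vertexBoundary_componentCompl_subset D' hc
  obtain ⟨-, a, haD', hac⟩ := hc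
  have hcD : c ∉ D := fun h => ComponentCompl.notMem_of_mem h hcC
  have hva := reachable_of_mem_componentCompl
    (fun x hx y hy => hadj x y (hnotMem x hx) (hnotMem y hy)) hvD' haD'
  have hca := (hadj a c (hnotMem a haD') ⟨hcD, hcP⟩ hac).reachable
  exact (reachable_deleteEdges_edgesOffAt_of_mem_support hGH hcC).trans (hva.trans hca).symm

theorem notMem_of_mem_edgesOffAt (hPC : P ⊆ {v | v ∈ C.support})
    (hPD : Disjoint P (vertexBoundary G D)) {a b : V} (he : s(a, b) ∈ edgesOffAt C P) :
    a ∉ D ∧ b ∉ D := by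
  have hends : ∀ p ∈ P, p ∉ D ∧ ∀ q, G.Adj p q → q ∉ D := fun p hp =>
    have hpD : p ∉ D := fun h => ComponentCompl.notMem_of_mem h (hPC hp)
    ⟨hpD, fun q hpq hq => Set.disjoint_left.1 hPD hp ⟨hpD, q, hq, hpq.symm⟩⟩
  obtain ⟨hab : G.Adj a b, -, p, hp, hpab⟩ := he
  rcases Sym2.mem_iff.1 hpab with rfl | rfl
  · exact ⟨(hends p hp).1, (hends p hp).2 b hab⟩
  · exact ⟨(hends p hp).2 a hab.symm, (hends p hp).1⟩

theorem connected_deleteEdges_edgesOffAt (hH : H.Connected)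
    (hGH : ∀ a ∉ D, ∀ b ∉ D, G.Adj a b → H.Adj a b) (hPC : P ⊆ {v | v ∈ C.support})
    (hPD : Disjoint P (vertexBoundary G D))
    (hP : ∀ D' : G.ComponentCompl {v | v ∈ C.support}, ¬vertexBoundary G D' ⊆ P) :
    (H.deleteEdges (edgesOffAt C P)).Connected := by
  have hreach {v : V} (hv : v ∉ D) : (H.deleteEdges (edgesOffAt C P)).Reachable u v :=
    reachable_deleteEdges_edgesOffAt_of_notMem hGH hPC hP hv
  refine connected_deleteEdges_of_reachable hH fun a b _ he => ?_
  obtain ⟨ha, hb⟩ := notMem_of_mem_edgesOffAt hPC hPD he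
  exact (hreach ha).symm.trans (hreach hb)

theorem ncard_add_card_le_ncard_edgeSet [Finite V] {F : Set (Sym2 V)} (hF : F ⊆ G.edgeSet)
    (hGF : (G.deleteEdges F).Connected) (hC : C.IsCycle) (hCF : ∀ e ∈ C.edges, e ∉ F) :
    F.ncard + Nat.card V ≤ G.edgeSet.ncard := by
  have hle := card_le_ncard_edgeSet_of_isCycle hGF (hC.toDeleteEdges _ _ hCF)
  rw [edgeSet_deleteEdges, Set.ncard_sdiff hF] at hle
  have := Set.ncard_le_ncard hF
  omega

end Counting

theorem IsLongestCycle.exists_deletable_edges (h3 : ThreeConnected G) {u : V} {C : G.Walk u u}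
    (hC : IsLongestCycle G C) (D : G.ComponentCompl {v | v ∈ C.support}) :
    ∃ F ⊆ G.edgeSet, 3 ≤ F.ncard ∧ (∀ e ∈ C.edges, e ∉ F) ∧
      (∀ a b, s(a, b) ∈ F → a ∉ D ∧ b ∉ D) ∧
      ∀ H : SimpleGraph V, H.Connected → (∀ a ∉ D, ∀ b ∉ D, G.Adj a b → H.Adj a b) →
        (H.deleteEdges F).Connected := by
  set P := predecessors C (vertexBoundary G D)
  have hPC : P ⊆ {v | v ∈ C.support} := predecessors_subset_support C _
  have hPD : Disjoint P (vertexBoundary G D) := hC.disjoint_predecessors_vertexBoundary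
  have hboundary := h3.three_le_ncard_vertexBoundary_componentCompl hC.1
  refine ⟨edgesOffAt C P, fun e he => he.1, ?_, fun e he heP => heP.2.1 he,
    fun a b => notMem_of_mem_edgesOffAt hPC hPD, fun H hH hGH => ?_⟩
  · calc 3 ≤ (vertexBoundary G D).ncard := hboundary D
      _ ≤ P.ncard := ncard_le_ncard_predecessors hC.1 (vertexBoundary_componentCompl_subset D)
      _ ≤ _ := h3.ncard_le_ncard_edgesOffAt hC.1 hPC hC.isIndepSet_predecessors
  · refine connected_deleteEdges_edgesOffAt hH hGH hPC hPD fun D' =>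
      hC.not_vertexBoundary_subset_predecessors ?_
    exact (Set.one_lt_ncard_iff_nontrivial_and_finite.1 (lt_of_lt_of_le (by simp) (hboundary D'))).1

theorem longest_cycle_meets_largest_bond_of_costar_general (h3 : ThreeConnected G) {u : V}
    {C : G.Walk u u} (hC : IsLongestCycle G C) {B : Set (Sym2 V)} (hB : IsBond G B)
    (hm : G.edgeSet.ncard ≤ B.ncard + Nat.card V + 1) : ∃ e ∈ C.edges, e ∈ B := by
  by_contra! hCB
  have := h3.finite
  obtain ⟨D, hD⟩ := hB.exists_componentCompl_of_edges h3.connected hCB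
  obtain ⟨F, hFG, hF, hCF, hFD, hconn⟩ := hC.exists_deletable_edges h3 D
  obtain ⟨b, hb⟩ := hB.1
  have hBF : (G.deleteEdges (B \ {b} ∪ F)).Connected := by
    rw [← deleteEdges_deleteEdges]
    exact hconn _ (hB.connected_deleteEdges_sdiff_singleton h3.connected hb)
      fun x hx y hy hxy => deleteEdges_adj.2 ⟨hxy, fun h => hD x hx y hy h.1⟩
  have hdisj : Disjoint (B \ {b}) F := by
    refine Set.disjoint_left.2 ?_
    rintro ⟨x, y⟩ hxyB hxyF
    exact hD x (hFD x y hxyF).1 y (hFD x y hxyF).2 hxyB.1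
  have hcount : (B \ {b} ∪ F).ncard + Nat.card V ≤ G.edgeSet.ncard :=
    ncard_add_card_le_ncard_edgeSet (Set.union_subset (Set.sdiff_subset.trans hB.2.1.1) hFG) hBF
      hC.1 fun e he heBF => heBF.elim (fun h => hCB e he h.1) (hCF e he)
  have hBcard := Set.ncard_sdiff_singleton_add_one hb
  rw [Set.ncard_union_eq hdisj] at hcount
  omega

end

/-- if a simple 3-connected graph with `n` vertices and `m` edges has a largest
bond of size at least `m - n - 1`, then every longest cycle meets every largest bond. -/
theorem longest_cycle_meets_largest_bond_of_costar {V : Type*} [Fintype V] (G : SimpleGraph V)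
    (h3 : ThreeConnected G)
    (hbig : ∃ B₀ : Set (Sym2 V), IsBond G B₀ ∧
      G.edgeSet.ncard ≤ B₀.ncard + Nat.card V + 1)
    (u : V) (C : G.Walk u u) (hC : IsLongestCycle G C)
    (B : Set (Sym2 V)) (hB : IsLargestBond G B) :
    ∃ e ∈ C.edges, e ∈ B := by
  obtain ⟨B₀, hB₀, hm⟩ := hbig
  have hle : B₀.ncard ≤ B.ncard := hB.2 B₀ hB₀
  exact longest_cycle_meets_largest_bond_of_costar_general h3 hC hB.1 (by omega)
end

section
/- There exists a simple 2-connected graph G and a longest cycle C of G and a largest bond B of G such that C and B share no edge. -/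
open SimpleGraph

/-!
A ring of three cycles, consecutive ones sharing a vertex. Let the shared vertices be `0`, `2`,
`10`: two triangles on `0, 2` and on `0, 10`, and an octagon in which `2` and `10` are opposite.

Every vertex star of a 2-connected graph is a bond, and the star of `0` has four edges. It avoids
the octagon. Deleting `2` and `10` leaves three components with three vertices each, and a cycle
cannot meet all three, so it omits three of the eleven vertices: the octagon is a longest cycle.
The shared vertices cut each cycle of the ring into two threads, i.e. paths whose inner vertices
have degree two. A bond with more than two edges has at most one edge in each thread, since two
edges of a thread already form an edge-cut. The edges split into two closed walks that run once
around the ring, along three threads each. A bond meets such a walk in an even number of edges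
that is at most three, hence in at most two; so it has at most four edges.
-/

section TwoConnectivity

variable {V : Type*} {G : SimpleGraph V}

theorem TwoConnected.connected (hG : TwoConnected G) : G.Connected := by
  have h := hG.2 ∅ (by simp only [Set.ncard_empty, zero_le])
  rw [Set.compl_empty] at h
  exact (induceUnivIso G).connected_iff.mp h

theorem reachable_bot_induce_compl [LinearOrder V] [WellFoundedLT V] [OrderBot V]
    (hdown : ∀ v ≠ ⊥, ∃ w < v, G.Adj v w) {s : Set V} {v : V} (hv : ∀ a ∈ s, v < a)
    (hvs : v ∈ sᶜ) (hbot : ⊥ ∈ sᶜ) : (G.induce sᶜ).Reachable ⟨v, hvs⟩ ⟨⊥, hbot⟩ := by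
  induction v using WellFoundedLT.induction with
  | ind v ih =>
    by_cases hv_bot : v = ⊥
    · subst hv_bot
      rfl
    · obtain ⟨w, hwv, hadj⟩ := hdown v hv_bot
      have hw : ∀ a ∈ s, w < a := fun a ha => hwv.trans (hv a ha)
      have hws : w ∈ sᶜ := fun hmem => (hw w hmem).false
      have hstep : (G.induce sᶜ).Adj ⟨v, hvs⟩ ⟨w, hws⟩ := hadj
      exact hstep.reachable.trans (ih w hwv hw hws)

theorem reachable_top_induce_compl [LinearOrder V] [WellFoundedGT V] [OrderTop V]
    (hup : ∀ v ≠ ⊤, ∃ w, v < w ∧ G.Adj v w) {s : Set V} {v : V} (hv : ∀ a ∈ s, a < v)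
    (hvs : v ∈ sᶜ) (htop : ⊤ ∈ sᶜ) : (G.induce sᶜ).Reachable ⟨v, hvs⟩ ⟨⊤, htop⟩ :=
  reachable_bot_induce_compl (V := Vᵒᵈ) (G := G) hup hv hvs htop

/-- The order of the vertices is an `st`-numbering of `G`: the two extreme vertices are adjacent
and every other vertex has both a smaller and a larger neighbour. -/
structure IsSTNumbering [LinearOrder V] [BoundedOrder V] (G : SimpleGraph V) : Prop where
  adj_bot_top : G.Adj ⊥ ⊤
  exists_lt_adj : ∀ v ≠ ⊥, ∃ w < v, G.Adj v w
  exists_gt_adj : ∀ v ≠ ⊤, ∃ w, v < w ∧ G.Adj v w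

/- Below a deleted vertex one can descend to `⊥`, above it one can ascend to `⊤`. -/
theorem IsSTNumbering.twoConnected [LinearOrder V] [BoundedOrder V]
    (hG : IsSTNumbering G) (hcard : 3 ≤ Nat.card V) : TwoConnected G := by
  have : Finite V := Nat.finite_of_card_ne_zero (by lia)
  refine ⟨hcard, fun s hs => connected_iff_exists_forall_reachable _ |>.mpr ?_⟩
  have hsub : s.Subsingleton := fun a ha b hb => (Set.ncard_le_one s.toFinite).mp hs a ha b hb
  have hside : ∀ v ∈ sᶜ, (∀ a ∈ s, v < a) ∨ ∀ a ∈ s, a < v := by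
    intro v hv
    by_contra! h
    obtain ⟨⟨a, ha, hav⟩, b, hb, hvb⟩ := h
    obtain rfl := hsub ha hb
    exact hv (le_antisymm hvb hav ▸ ha)
  by_cases htop : ⊤ ∈ s
  · have hbot : ⊥ ∈ sᶜ := fun h => hG.adj_bot_top.ne (hsub h htop)
    refine ⟨⟨⊥, hbot⟩, fun ⟨v, hv⟩ => (reachable_bot_induce_compl hG.exists_lt_adj ?_ hv hbot).symm⟩
    intro a ha
    rw [hsub ha htop]
    exact lt_top_iff_ne_top.mpr fun h => hv (h ▸ htop)
  · refine ⟨⟨⊤, htop⟩, fun ⟨v, hv⟩ => Reachable.symm ?_⟩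
    rcases hside v hv with hlt | hgt
    · have hbot : ⊥ ∈ sᶜ := fun h => not_lt_bot (hlt ⊥ h)
      have hadj : (G.induce sᶜ).Adj ⟨⊥, hbot⟩ ⟨⊤, htop⟩ := hG.adj_bot_top
      exact (reachable_bot_induce_compl hG.exists_lt_adj hlt hv hbot).trans hadj.reachable
    · exact reachable_top_induce_compl hG.exists_gt_adj hgt hv htop

end TwoConnectivity

section Bonds

variable {V : Type*} {G : SimpleGraph V} {X : Set V} {S T : Set (Sym2 V)}

theorem mk_mem_crossEdges {u v : V} :
    s(u, v) ∈ crossEdges G X ↔ G.Adj u v ∧ ¬(u ∈ X ↔ v ∈ X) := by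
  simp only [crossEdges, Set.mem_ofPred_eq, mem_edgeSet, Set.mem_compl_iff, Sym2.eq_iff]
  grind

theorem crossEdges_singleton (v : V) : crossEdges G {v} = G.incidenceSet v := by
  ext e
  induction e with | _ x y
  rw [mk_mem_crossEdges, mk'_mem_incidenceSet_iff]
  simp only [Set.mem_singleton_iff]
  grind [G.ne_of_adj]

theorem isEdgeCut_of_crossEdges_subset (hS : S ⊆ G.edgeSet) (hX : X.Nonempty)
    (hXc : Xᶜ.Nonempty) (hXS : crossEdges G X ⊆ S) : IsEdgeCut G S := by
  obtain ⟨⟨x, hx⟩, y, hy⟩ := hX, hXc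
  refine ⟨hS, fun hconn => ?_⟩
  obtain ⟨p⟩ := hconn x y
  obtain ⟨d, -, hd_fst, hd_snd⟩ := p.exists_boundary_dart X hx hy
  obtain ⟨hadj, hd⟩ := (deleteEdges_adj).mp d.adj
  exact hd (hXS (mk_mem_crossEdges.mpr ⟨hadj, by simp [hd_fst, hd_snd]⟩))

theorem IsEdgeCut.exists_crossEdges_subset [Nonempty V] (hS : IsEdgeCut G S) :
    ∃ X : Set V, X.Nonempty ∧ Xᶜ.Nonempty ∧ crossEdges G X ⊆ S := by
  obtain ⟨x, y, hxy⟩ : ∃ x y, ¬(G.deleteEdges S).Reachable x y := by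
    by_contra! h
    exact hS.2 ⟨h⟩
  refine ⟨{z | (G.deleteEdges S).Reachable x z}, ⟨x, .rfl⟩, ⟨y, hxy⟩, fun e he => ?_⟩
  induction e with | _ u v
  obtain ⟨hadj, hcross⟩ := mk_mem_crossEdges.mp he
  by_contra hS
  have huv : (G.deleteEdges S).Adj u v := deleteEdges_adj.mpr ⟨hadj, hS⟩
  exact hcross ⟨fun hu => hu.trans huv.reachable, fun hv => hv.trans huv.symm.reachable⟩

theorem crossEdges_nonempty (hG : G.Connected) (hX : X.Nonempty) (hXc : Xᶜ.Nonempty) :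
    (crossEdges G X).Nonempty := by
  obtain ⟨⟨x, hx⟩, y, hy⟩ := hX, hXc
  obtain ⟨p⟩ := hG x y
  obtain ⟨d, -, hd_fst, hd_snd⟩ := p.exists_boundary_dart X hx hy
  exact ⟨s(d.fst, d.snd), mk_mem_crossEdges.mpr ⟨d.adj, by simp [hd_fst, hd_snd]⟩⟩

theorem IsBond.eq_of_isEdgeCut_subset (hT : IsBond G T) (hST : S ⊆ T) (hS : S.Nonempty)
    (hcut : IsEdgeCut G S) : S = T :=
  hST.eq_or_ssubset.resolve_right fun hss => hT.2.2 S hss hS hcut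

theorem IsBond.exists_eq_crossEdges (hG : G.Connected) (hT : IsBond G T) :
    ∃ X : Set V, T = crossEdges G X := by
  have := hG.nonempty
  obtain ⟨X, hX, hXc, hXT⟩ := hT.2.1.exists_crossEdges_subset
  have hcut : IsEdgeCut G (crossEdges G X) :=
    isEdgeCut_of_crossEdges_subset (fun e he => he.1) hX hXc subset_rfl
  exact ⟨X, (hT.eq_of_isEdgeCut_subset hXT (crossEdges_nonempty hG hX hXc) hcut).symm⟩

theorem isBond_crossEdges (hG : G.Connected) (hX : (G.induce X).Connected)
    (hXc : (G.induce Xᶜ).Connected) : IsBond G (crossEdges G X) := by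
  have hX_ne : X.Nonempty := Set.nonempty_coe_sort.mp hX.nonempty
  have hXc_ne : Xᶜ.Nonempty := Set.nonempty_coe_sort.mp hXc.nonempty
  refine ⟨crossEdges_nonempty hG hX_ne hXc_ne,
    isEdgeCut_of_crossEdges_subset (fun e he => he.1) hX_ne hXc_ne subset_rfl, ?_⟩
  rintro T ⟨hTX, hXT⟩ - ⟨-, hdisc⟩
  obtain ⟨_, ⟨hadj, x, hx, y, hy, rfl⟩, hxyT⟩ := Set.not_subset.mp hXT
  have hside : ∀ Y : Set V, (∀ u ∈ Y, ∀ v ∈ Y, u ∈ X ↔ v ∈ X) →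
      (G.induce Y) ≤ (G.deleteEdges T).induce Y := fun Y hY u v huv =>
    deleteEdges_adj.mpr ⟨huv, fun h => (mk_mem_crossEdges.mp (hTX h)).2 (hY u u.2 v v.2)⟩
  have hX' := hX.mono (hside X (by grind))
  have hXc' := hXc.mono (hside Xᶜ (by grind))
  have hunion := connected_induce_union hX'.preconnected hXc'.preconnected hx hy
    (deleteEdges_adj.mpr ⟨hadj, hxyT⟩)
  rw [Set.union_compl_self] at hunion
  exact hdisc ((induceUnivIso _).connected_iff.mp hunion)

theorem TwoConnected.isBond_incidenceSet (hG : TwoConnected G) (v : V) :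
    IsBond G (G.incidenceSet v) := by
  rw [← crossEdges_singleton]
  exact isBond_crossEdges hG.connected .of_subsingleton
    (hG.2 {v} (Set.ncard_singleton v).le)

open scoped Classical in
theorem even_countP_crossEdges_iff (X : Set V) {u v : V} (p : G.Walk u v) :
    Even (p.edges.countP (· ∈ crossEdges G X)) ↔ (u ∈ X ↔ v ∈ X) := by
  induction p with
  | nil => simp only [Walk.edges_nil, List.countP_nil, Even.zero]
  | cons hadj p ih =>
    simp only [Walk.edges_cons, List.countP_cons, decide_eq_true_eq, mk_mem_crossEdges, hadj,
      true_and]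
    split_ifs <;> grind

open scoped Classical in
theorem IsBond.even_countP_edges (hG : G.Connected) (hT : IsBond G T) {u : V} (p : G.Walk u u) :
    Even (p.edges.countP (· ∈ T)) := by
  obtain ⟨X, rfl⟩ := hT.exists_eq_crossEdges hG
  exact (even_countP_crossEdges_iff X p).mpr Iff.rfl

open scoped Classical in
theorem ncard_le_countP {α : Type*} {T : Set α} {l : List α} (h : ∀ a ∈ T, a ∈ l) :
    T.ncard ≤ l.countP (· ∈ T) := by
  have hT : T ⊆ (l.filter (· ∈ T)).toFinset := fun a ha => by simp [h a ha, ha]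
  calc T.ncard ≤ (l.filter (· ∈ T)).toFinset.card := by
        rw [← Set.ncard_coe_finset]
        exact Set.ncard_le_ncard hT (Finset.finite_toSet _)
    _ ≤ (l.filter (· ∈ T)).length := List.toFinset_card_le _
    _ = l.countP (· ∈ T) := List.countP_eq_length_filter.symm

end Bonds

section Threads

variable {V : Type*} {G : SimpleGraph V} {u v w : V} {T : Set (Sym2 V)}

/-- A thread of `G`: a path whose internal vertices have no edges of `G` outside the path, so that
for distinct ends the internal vertices have degree two in `G`. -/
structure IsThread (p : G.Walk u v) : Prop where
  isPath : p.IsPath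
  mem_edges_of_adj : ∀ x ∈ p.support, x ≠ u → x ≠ v → ∀ y, G.Adj x y → s(x, y) ∈ p.edges

theorem IsThread.adj_getVert {p : G.Walk u v} (hp : IsThread p) {k : ℕ} (hk_pos : 0 < k)
    (hk_lt : k < p.length) {y : V} (hadj : G.Adj (p.getVert k) y) :
    y = p.getVert (k - 1) ∨ y = p.getVert (k + 1) := by
  have hinj : ∀ {m n}, m ≤ p.length → n ≤ p.length → p.getVert m = p.getVert n → m = n :=
    fun hm hn h => hp.isPath.getVert_injOn hm hn h
  have hne_start : p.getVert k ≠ u := fun h =>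
    hk_pos.ne' (hinj hk_lt.le (Nat.zero_le _) (h.trans p.getVert_zero.symm))
  have hne_end : p.getVert k ≠ v := fun h =>
    hk_lt.ne (hinj hk_lt.le le_rfl (h.trans p.getVert_length.symm))
  have hmem := hp.mem_edges_of_adj _ (p.getVert_mem_support k) hne_start hne_end y hadj
  obtain ⟨m, hm, hedge⟩ := (p.mk_mem_edges_iff_exists).mp hmem
  rcases Sym2.eq_iff.mp hedge with ⟨hk, rfl⟩ | ⟨rfl, hk⟩
  · exact .inr (by rw [hinj hm.le hk_lt.le hk])
  · exact .inl (by rw [← hinj hm hk_lt.le hk, Nat.succ_sub_one])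

/- The vertices strictly between the two edges are separated from the ends of the thread. -/
theorem IsThread.isEdgeCut_pair {p : G.Walk u v} (hp : IsThread p) {i j : ℕ} (hij : i < j)
    (hj : j < p.length) :
    IsEdgeCut G {s(p.getVert i, p.getVert (i + 1)), s(p.getVert j, p.getVert (j + 1))} := by
  have hi : i < p.length := hij.trans hj
  refine isEdgeCut_of_crossEdges_subset (X := p.getVert '' Set.Ioc i j) ?_
    ⟨_, j, ⟨hij, le_rfl⟩, rfl⟩ ⟨p.getVert i, ?_⟩ ?_
  · rintro _ (rfl | rfl)
    exacts [p.adj_getVert_succ hi, p.adj_getVert_succ hj]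
  · rintro ⟨k, ⟨hik, hkj⟩, hk⟩
    exact hik.ne (hp.isPath.getVert_injOn (hkj.trans hj.le) hi.le hk).symm
  · rintro _ ⟨hadj, _, ⟨k, ⟨hik, hkj⟩, rfl⟩, y, hy, rfl⟩
    rcases hp.adj_getVert (by lia) (by lia) hadj with rfl | rfl
    · have hk : k - 1 = i := by
        by_contra hne
        exact hy ⟨k - 1, ⟨by lia, by lia⟩, rfl⟩
      obtain rfl : k = i + 1 := by lia
      exact .inl Sym2.eq_swap
    · have hk : k = j := by
        by_contra hne
        exact hy ⟨k + 1, ⟨by lia, by lia⟩, rfl⟩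
      exact .inr (by rw [hk]; rfl)

theorem IsThread.eq_of_mem_isBond {p : G.Walk u v} (hp : IsThread p) (hT : IsBond G T)
    (hcard : 2 < T.ncard) {e f : Sym2 V} (he : e ∈ p.edges) (hf : f ∈ p.edges) (heT : e ∈ T)
    (hfT : f ∈ T) : e = f := by
  obtain ⟨i, hi, rfl⟩ := List.getElem_of_mem he
  obtain ⟨j, hj, rfl⟩ := List.getElem_of_mem hf
  have hpair : ∀ {a b : Sym2 V}, a ∈ T → b ∈ T → ¬IsEdgeCut G {a, b} := by
    intro a b ha hb hcut
    have hT_eq := hT.eq_of_isEdgeCut_subset (Set.pair_subset ha hb) ⟨a, .inl rfl⟩ hcut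
    have hle : ({a, b} : Set (Sym2 V)).ncard ≤ 2 := by
      simpa only [Set.ncard_singleton] using Set.ncard_insert_le a {b}
    exact hcard.not_ge (hT_eq ▸ hle)
  rw [p.length_edges] at hi hj
  rw [p.getElem_edges] at heT hfT ⊢
  rw [p.getElem_edges]
  rcases lt_trichotomy i j with hij | rfl | hji
  · exact (hpair heT hfT (hp.isEdgeCut_pair hij hj)).elim
  · rfl
  · exact (hpair hfT heT (hp.isEdgeCut_pair hji hi)).elim

open scoped Classical in
theorem IsThread.countP_edges_le_one {p : G.Walk u v} (hp : IsThread p) (hT : IsBond G T)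
    (hcard : 2 < T.ncard) : p.edges.countP (· ∈ T) ≤ 1 := by
  have hnodup : (p.edges.filter (· ∈ T)).Nodup := hp.isPath.isTrail.edges_nodup.filter _
  rw [List.countP_eq_length_filter, ← List.toFinset_card_of_nodup hnodup, Finset.card_le_one]
  intro e he f hf
  simp only [List.mem_toFinset, List.mem_filter, decide_eq_true_eq] at he hf
  exact hp.eq_of_mem_isBond hT hcard he.1 hf.1 he.2 hf.2

open scoped Classical in
theorem countP_edges_three_threads_le_two (hG : G.Connected) (hT : IsBond G T)
    (hcard : 2 < T.ncard) {p : G.Walk u v} {q : G.Walk v w} {r : G.Walk w u} (hp : IsThread p)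
    (hq : IsThread q) (hr : IsThread r) :
    ((p.append q).append r).edges.countP (· ∈ T) ≤ 2 := by
  have hle : ((p.append q).append r).edges.countP (· ∈ T) ≤ 3 := by
    have := hp.countP_edges_le_one hT hcard
    have := hq.countP_edges_le_one hT hcard
    have := hr.countP_edges_le_one hT hcard
    simp only [Walk.edges_append, List.countP_append]
    lia
  obtain ⟨k, hk⟩ := hT.even_countP_edges hG ((p.append q).append r)
  lia

end Threads

section Cycles

variable {V : Type*} {G : SimpleGraph V} {r a b x y : V} {D : G.Walk r r}

/- Of the two arcs of the cycle between `x` and `y`, at least one misses `a`. -/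
theorem exists_walk_avoiding_of_isCycle (hD : D.IsCycle) (hx : x ∈ D.support)
    (hy : y ∈ D.support) (hax : a ≠ x) (hay : a ≠ y) :
    ∃ p : G.Walk x y, p.edges ⊆ D.edges ∧ a ∉ p.support := by
  classical
  set C := D.rotate x hx
  have hC : C.IsCycle := hD.rotate hx
  have hyC : y ∈ C.support := (D.mem_support_rotate_iff x hx).mpr hy
  have hCD : C.edges ⊆ D.edges := (D.rotate_edges x hx).perm.subset
  by_cases ha : a ∈ (C.takeUntil y hyC).support
  · refine ⟨(C.dropUntil y hyC).reverse, ?_, fun ha' => ?_⟩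
    · rw [Walk.edges_reverse]
      exact List.reverse_subset.mpr (List.Subset.trans (C.edges_dropUntil_subset_edges hyC) hCD)
    · rw [Walk.support_reverse, List.mem_reverse] at ha'
      have hnodup := hC.support_nodup
      rw [← C.take_spec hyC, Walk.tail_support_append] at hnodup
      exact List.disjoint_of_nodup_append hnodup
        ((Walk.mem_support_iff _).mp ha |>.resolve_left hax)
        ((Walk.mem_support_iff _).mp ha' |>.resolve_left hay)
  · exact ⟨C.takeUntil y hyC, List.Subset.trans (C.edges_takeUntil_subset_edges hyC) hCD, ha⟩

theorem ncard_neighborSet_toSubgraph_le_two (hD : D.IsCycle) (x : V) :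
    (D.toSubgraph.neighborSet x).ncard ≤ 2 := by
  by_cases hx : x ∈ D.support
  · exact (hD.ncard_neighborSet_toSubgraph_eq_two hx).le
  · have hempty : D.toSubgraph.neighborSet x = ∅ := Set.eq_empty_of_forall_notMem fun y hy =>
      hx (D.mem_verts_toSubgraph.mp (D.toSubgraph.edge_vert hy))
    simp only [hempty, Set.ncard_empty, zero_le]

/- Two deleted vertices split a cycle into at most two arcs; here `κ` labels the components of
`G - {a, b}`, possibly giving several of them the same label. -/
theorem ncard_image_support_diff_pair_le_two {ι : Type*} {κ : V → ι}
    (hκ : ∀ x y, G.Adj x y → x ∉ ({a, b} : Set V) → y ∉ ({a, b} : Set V) → κ x = κ y)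
    (hD : D.IsCycle) : (κ '' ({x | x ∈ D.support} \ {a, b})).ncard ≤ 2 := by
  by_cases hsub : (κ '' ({x | x ∈ D.support} \ {a, b})).Subsingleton
  · exact ((Set.ncard_le_one hsub.finite).mpr hsub).trans one_le_two
  have himage : κ '' ({x | x ∈ D.support} \ {a, b}) ⊆ κ '' D.toSubgraph.neighborSet b := by
    rintro _ ⟨x, ⟨hx, hxab⟩, rfl⟩
    obtain ⟨y, ⟨hy, hyab⟩, hxy⟩ : ∃ y ∈ {x | x ∈ D.support} \ {a, b}, κ y ≠ κ x := by
      by_contra! h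
      exact hsub (Set.subsingleton_of_forall_eq (κ x) (Set.forall_mem_image.mpr h))
    obtain ⟨p, hpD, hap⟩ := exists_walk_avoiding_of_isCycle hD hx hy
      (fun h => hxab (.inl h.symm)) (fun h => hyab (.inl h.symm))
    obtain ⟨d, hd, ⟨hd_fst, hd_fst_κ⟩, hd_snd⟩ :=
      p.exists_boundary_dart {z | z ∉ ({a, b} : Set V) ∧ κ z = κ x} ⟨hxab, rfl⟩ fun h => hxy h.2
    have hd_snd_a : d.snd ≠ a := fun h => hap (h ▸ p.dart_snd_mem_support_of_mem_darts hd)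
    have hd_snd_b : d.snd = b := by
      by_contra hne
      have hd_snd_ab : d.snd ∉ ({a, b} : Set V) := not_or.mpr ⟨hd_snd_a, hne⟩
      exact hd_snd ⟨hd_snd_ab, (hκ _ _ d.adj hd_fst hd_snd_ab).symm.trans hd_fst_κ⟩
    have hdD : s(b, d.fst) ∈ D.edges := by
      rw [← hd_snd_b, Sym2.eq_swap]
      exact hpD (List.mem_map_of_mem hd)
    exact ⟨d.fst, Walk.adj_toSubgraph_iff_mem_edges.mpr hdD, hd_fst_κ⟩
  have hfin : (D.toSubgraph.neighborSet b).Finite := D.finite_neighborSet_toSubgraph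
  calc _ ≤ (κ '' D.toSubgraph.neighborSet b).ncard := Set.ncard_le_ncard himage (hfin.image κ)
    _ ≤ (D.toSubgraph.neighborSet b).ncard := Set.ncard_image_le hfin
    _ ≤ 2 := ncard_neighborSet_toSubgraph_le_two hD b

theorem length_le_card_of_isCycle (hD : D.IsCycle) {A : Finset V}
    (hA : ∀ x ∈ D.support, x ∈ A) : D.length ≤ A.card := by
  classical
  calc D.length = D.support.tail.toFinset.card := by
        rw [List.toFinset_card_of_nodup hD.support_nodup, List.length_tail, D.length_support,
          Nat.add_sub_cancel]
    _ ≤ A.card := Finset.card_le_card fun x hx =>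
        hA x (List.mem_of_mem_tail (List.mem_toFinset.mp hx))

end Cycles

/-- The ring of two triangles `0, 1, 2` and `0, 9, 10` and the octagon `2, 3, 4, 5, 10, 8, 7, 6`.
The vertices are numbered so that their order is an `st`-numbering. -/
def cycleRing : SimpleGraph (Fin 11) :=
  .fromRel fun x y => (x, y) ∈ [(0, 1), (1, 2), (0, 2), (2, 3), (3, 4), (4, 5), (5, 10),
    (2, 6), (6, 7), (7, 8), (8, 10), (0, 9), (9, 10), (0, 10)]

namespace cycleRing

instance : DecidableRel cycleRing.Adj := by
  unfold cycleRing
  infer_instance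

theorem twoConnected : TwoConnected cycleRing :=
  IsSTNumbering.twoConnected ⟨by decide, by decide, by decide⟩
    (by simp only [Nat.card_eq_fintype_card, Fintype.card_fin]; lia)

/-- The thread from `2` to `10` through `3`. -/
def upperArc : cycleRing.Walk 2 10 :=
  .cons (v := 3) (by decide) <| .cons (v := 4) (by decide) <| .cons (v := 5) (by decide) <|
    .cons (by decide) .nil

/-- The thread from `2` to `10` through `6`. -/
def lowerArc : cycleRing.Walk 2 10 :=
  .cons (v := 6) (by decide) <| .cons (v := 7) (by decide) <| .cons (v := 8) (by decide) <|
    .cons (by decide) .nil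

/-- The cycle that runs through both threads between `2` and `10`; it has maximum length. -/
def octagon : cycleRing.Walk 2 2 := upperArc.append lowerArc.reverse

theorem isCycle_octagon : octagon.IsCycle := by
  rw [Walk.isCycle_def, Walk.isTrail_def]
  exact ⟨by decide, nofun, by decide⟩

theorem length_le_eight_of_isCycle {u : Fin 11} {D : cycleRing.Walk u u} (hD : D.IsCycle) :
    D.length ≤ 8 := by
  let component : Fin 11 → Fin 3 := ![0, 0, 0, 1, 1, 1, 2, 2, 2, 0, 0]
  have hcomponent : ∀ i,
      (Finset.univ.filter fun x => component x = i → x = 2 ∨ x = 10).card = 8 := by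
    decide
  have himage := ncard_image_support_diff_pair_le_two (a := 2) (b := 10) (κ := component)
    (by decide) hD
  obtain ⟨i, hi⟩ : ∃ i, i ∉ component '' ({x | x ∈ D.support} \ {2, 10}) := by
    by_contra! hall
    rw [Set.eq_univ_of_forall hall] at himage
    simp at himage
  calc D.length ≤ (Finset.univ.filter fun x => component x = i → x = 2 ∨ x = 10).card :=
        length_le_card_of_isCycle hD fun x hx => Finset.mem_filter.mpr
          ⟨Finset.mem_univ x, fun hxi => by_contra fun hx' => hi ⟨x, ⟨hx, hx'⟩, hxi⟩⟩
    _ = 8 := hcomponent i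

theorem isLongestCycle_octagon : IsLongestCycle cycleRing octagon :=
  ⟨isCycle_octagon, fun _ _ hD => length_le_eight_of_isCycle hD⟩

theorem isThread_upperArc : IsThread upperArc :=
  ⟨(Walk.isPath_def _).mpr (by decide), by decide⟩

theorem isThread_lowerArc : IsThread lowerArc :=
  ⟨(Walk.isPath_def _).mpr (by decide), by decide⟩

theorem ncard_le_four_of_isBond {T : Set (Sym2 (Fin 11))} (hT : IsBond cycleRing T) :
    T.ncard ≤ 4 := by
  classical
  by_contra! hlt
  have hcard : 2 < T.ncard := by lia
  let chordLeft : cycleRing.Walk 0 2 := .cons (by decide) .nil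
  let detourLeft : cycleRing.Walk 0 2 := .cons (v := 1) (by decide) <| .cons (by decide) .nil
  let chordRight : cycleRing.Walk 10 0 := .cons (by decide) .nil
  let detourRight : cycleRing.Walk 10 0 := .cons (v := 9) (by decide) <| .cons (by decide) .nil
  have hupper := countP_edges_three_threads_le_two twoConnected.connected hT hcard
    (p := chordLeft) ⟨(Walk.isPath_def _).mpr (by decide), by decide⟩
    isThread_upperArc (r := chordRight) ⟨(Walk.isPath_def _).mpr (by decide), by decide⟩
  have hlower := countP_edges_three_threads_le_two twoConnected.connected hT hcard
    (p := detourLeft) ⟨(Walk.isPath_def _).mpr (by decide), by decide⟩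
    isThread_lowerArc (r := detourRight) ⟨(Walk.isPath_def _).mpr (by decide), by decide⟩
  have hcover : ∀ e ∈ cycleRing.edgeSet,
      e ∈ ((chordLeft.append upperArc).append chordRight).edges ++
        ((detourLeft.append lowerArc).append detourRight).edges := by
    decide
  have hle := ncard_le_countP fun e he => hcover e (hT.2.1.1 he)
  rw [List.countP_append] at hle
  lia

theorem ncard_incidenceSet_zero : (cycleRing.incidenceSet 0).ncard = 4 := by
  rw [Set.ncard_eq_toFinset_card', Set.toFinset_card, card_incidenceSet_eq_degree]
  decide

theorem isLargestBond_incidenceSet_zero : IsLargestBond cycleRing (cycleRing.incidenceSet 0) :=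
  ⟨twoConnected.isBond_incidenceSet 0, fun _ hT =>
    (ncard_le_four_of_isBond hT).trans ncard_incidenceSet_zero.ge⟩

theorem zero_notMem_support_octagon : 0 ∉ octagon.support := by
  decide

end cycleRing

/-- there is a simple 2-connected graph with a longest cycle and a largest bond
sharing no edge. -/
theorem exists_two_connected_longest_cycle_avoids_largest_bond :
    ∃ (V : Type) (_ : Fintype V) (G : SimpleGraph V) (v : V) (C : G.Walk v v)
      (B : Set (Sym2 V)), TwoConnected G ∧ IsLongestCycle G C ∧ IsLargestBond G B ∧
        ∀ e ∈ C.edges, e ∉ B :=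
  ⟨Fin 11, inferInstance, cycleRing, 2, cycleRing.octagon, cycleRing.incidenceSet 0,
    cycleRing.twoConnected, cycleRing.isLongestCycle_octagon,
    cycleRing.isLargestBond_incidenceSet_zero, fun _ he h0 =>
      cycleRing.zero_notMem_support_octagon (Walk.mem_support_of_mem_edges he h0.2)⟩
end
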